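/- Let 𝒢 = {A_1, …, A_k} be a finite subset of UT(4,ℤ). If the ℝ≥0-cone generated by φ0(A_1), …, φ0(A_k) equals all of ℝ³, then the identity matrix is reachable, i.e., the 4×4 identity matrix belongs to the subsemigroup ⟨𝒢⟩ generated by 𝒢. -/

import Mathlib

open Finset

/-- The 4×4 upper unitriangular integer matrix `UT(a,b,c;d,e,f)`. -/
def UT (a b c d e f : ℤ) : Matrix (Fin 4) (Fin 4) ℤ :=
  !![1, a, d, f; 0, 1, b, e; 0, 0, 1, c; 0, 0, 0, 1]

/-- The set `UT(4,ℤ)` of 4×4 upper unitriangular integer matrices. -/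
def UT4 : Set (Matrix (Fin 4) (Fin 4) ℤ) :=
  {M | ∃ a b c d e f, M = UT a b c d e f}

/-- `φ0 : UT(4,ℤ) → ℤ³`, `UT(a,b,c;d,e,f) ↦ (a,b,c)`, followed by `ℤ³ → ℝ³`. -/
def phi0R (M : Matrix (Fin 4) (Fin 4) ℤ) : Fin 3 → ℝ :=
  ![(M 0 1 : ℝ), (M 1 2 : ℝ), (M 2 3 : ℝ)]

/-- The `ℝ≥0`-cone generated by a finite family of vectors in `ℝⁿ`. -/
def coneFin {k n : ℕ} (v : Fin k → (Fin n → ℝ)) : Set (Fin n → ℝ) :=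
  {x | ∃ r : Fin k → ℝ, (∀ i, 0 ≤ r i) ∧ x = ∑ i, r i • v i}

/-! If `⁅a, b⁆`, `y` and `z` are central, then
`a ^ n * b ^ n * (a⁻¹ * y) ^ n * (b⁻¹ * z) ^ n = ⁅a, b⁆ ^ n ^ 2 * (y * z) ^ n`. Modulo the last
nontrivial term `Z` of the lower central series, the submonoid generated by the given elements
contains, by induction, a positive power of every element and hence inverses of its own elements. So
it contains such `a`, `b`, `a⁻¹ * y` and `b⁻¹ * z` with `y`, `z ∈ Z`, and reaches powers of
commutators that grow quadratically in `n` while the drift `(y * z) ^ n` grows only linearly. Since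
the drift itself lies in `Z`, it is a product of commutators too, so quadratic growth in the
opposite direction cancels it.

In the abelianization one has to turn a relation with positive real coefficients between integer
vectors into one with positive integer coefficients. Applying a `ℚ`-linear functional `ℝ → ℚ` to
the coefficients preserves the relation, and a functional close to the identity on the finitely many
basis elements involved also preserves positivity.
-/

open scoped commutatorElement

section IsPowerFull

/-- Every element of `G` has a positive power in `M`, i.e. the isolator of `M` is all of `G`. In a
finitely generated abelian group this says that `M` is a subgroup of finite index. -/
def IsPowerFull {G : Type*} [Monoid G] (M : Submonoid G) : Prop :=
  ∀ g : G, ∃ n, 0 < n ∧ g ^ n ∈ M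

theorem IsPowerFull.map {G H : Type*} [Monoid G] [Monoid H] {M : Submonoid G}
    (hM : IsPowerFull M) {f : G →* H} (hf : Function.Surjective f) : IsPowerFull (M.map f) := by
  intro h
  obtain ⟨g, rfl⟩ := hf h
  obtain ⟨n, hn, hg⟩ := hM g
  exact ⟨n, hn, g ^ n, hg, map_pow f g n⟩

protected theorem IsPowerFull.inv_mem {G : Type*} [Group G] {M : Submonoid G} (hM : IsPowerFull M)
    {a : G} (ha : a ∈ M) : a⁻¹ ∈ M := by
  obtain ⟨n, hn, h⟩ := hM a⁻¹
  obtain ⟨n, rfl⟩ := Nat.exists_eq_succ_of_ne_zero hn.ne'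
  have hcancel : a ^ n * a⁻¹ ^ (n + 1) = a⁻¹ := by rw [pow_succ, inv_pow, mul_inv_cancel_left]
  exact hcancel ▸ mul_mem (pow_mem ha n) h

theorem one_mem_subsemigroup_closure_of_isPowerFull {G : Type*} [Group G] {S : Set G}
    (hS : S.Nonempty) (h : IsPowerFull (Submonoid.closure S)) : 1 ∈ Subsemigroup.closure S := by
  obtain ⟨g, hg⟩ := hS
  have hinv : g⁻¹ ∈ (Submonoid.closure S : Set G) := h.inv_mem (Submonoid.subset_closure hg)
  have hgS : g ∈ Subsemigroup.closure S := Subsemigroup.subset_closure hg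
  rw [Submonoid.closure_eq_one_union] at hinv
  rcases hinv with hone | hmem
  · exact inv_eq_one.mp hone ▸ hgS
  · exact mul_inv_cancel g ▸ mul_mem hgS hmem

end IsPowerFull

section ReachesWithDrift

/-- Up to a drift along `v` that is linear in `n`, the submonoid `M` contains powers of `c` whose
exponents are quadratic in `n`. -/
def ReachesWithDrift {G : Type*} [Monoid G] (M : Submonoid G) (c v : G) : Prop :=
  ∃ q, 0 < q ∧ ∀ n : ℕ, c ^ (q * n ^ 2) * v ^ n ∈ M

theorem ReachesWithDrift.one {G : Type*} [Monoid G] (M : Submonoid G) :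
    ReachesWithDrift M 1 1 :=
  ⟨1, one_pos, fun n ↦ by simp only [one_pow, mul_one, M.one_mem]⟩

theorem ReachesWithDrift.of_pow {G : Type*} [Monoid G] {M : Submonoid G} {c v : G} {k : ℕ}
    (hk : 0 < k) (h : ReachesWithDrift M (c ^ k) v) : ReachesWithDrift M c v := by
  obtain ⟨q, hq, h⟩ := h
  refine ⟨k * q, mul_pos hk hq, fun n ↦ ?_⟩
  rw [mul_assoc, pow_mul]
  exact h n

theorem ReachesWithDrift.mul {G : Type*} [Group G] {M : Submonoid G} {c d v w : G}
    (hc : ReachesWithDrift M c v) (hd : ReachesWithDrift M d w) (hcd : Commute c d)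
    (hv : v ∈ Subgroup.center G) (hw : w ∈ Subgroup.center G) :
    ∃ i j : ℕ, ReachesWithDrift M (c * d) (v ^ i * w ^ j) := by
  have hvx (x : G) : Commute v x := (Subgroup.mem_center_iff.mp hv x).symm
  have hwx (x : G) : Commute w x := (Subgroup.mem_center_iff.mp hw x).symm
  obtain ⟨p, hp, hc⟩ := hc
  obtain ⟨q, hq, hd⟩ := hd
  refine ⟨q, p, p * q, mul_pos hp hq, fun n ↦ ?_⟩
  have hrearrange : (c * d) ^ (p * q * n ^ 2) * (v ^ q * w ^ p) ^ n =
      (c ^ (p * n ^ 2) * v ^ n) ^ q * (d ^ (q * n ^ 2) * w ^ n) ^ p := by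
    rw [hcd.mul_pow, ((hvx _).pow_left q).mul_pow, pow_right_comm v, pow_right_comm w,
      ((hvx _).pow_left n).symm.mul_pow, ((hwx _).pow_left n).symm.mul_pow,
      (((hvx _).pow_left n).pow_left q).mul_mul_mul_comm, ← pow_mul c, ← pow_mul d,
      mul_right_comm p _ q, mul_right_comm q _ p, mul_comm q p]
  exact hrearrange ▸ mul_mem (pow_mem (hc n) q) (pow_mem (hd n) p)

variable {C : Type*} [CommGroup C] {T : Submonoid C}

theorem exists_uniform_drift [Group.FG C] (h : ∀ c, ∃ v ∈ T, ReachesWithDrift T c v) :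
    ∃ u, ∀ c, ∃ s : ℕ, ReachesWithDrift T c (u ^ s) := by
  classical
  obtain ⟨S, hS⟩ := Monoid.fg_def.mp (inferInstance : Monoid.FG C)
  choose v hvT hv using h
  refine ⟨∏ x ∈ S, v x, fun c ↦ ?_⟩
  have hc : c ∈ Submonoid.closure (S : Set C) := hS ▸ Submonoid.mem_top c
  induction hc using Submonoid.closure_induction with
  | one => exact ⟨0, by simpa only [pow_zero] using ReachesWithDrift.one T⟩
  | mem x hx =>
    obtain ⟨q, hq, hx'⟩ := hv x
    refine ⟨1, q, hq, fun n ↦ ?_⟩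
    rw [pow_one, ← Finset.mul_prod_erase S v hx, mul_pow, ← mul_assoc]
    exact mul_mem (hx' n) (pow_mem (prod_mem fun y _ ↦ hvT y) n)
  | mul x y _ _ ihx ihy =>
    obtain ⟨s, hx⟩ := ihx
    obtain ⟨t, hy⟩ := ihy
    obtain ⟨i, j, hxy⟩ := hx.mul hy (Commute.all x y)
      (CommGroup.center_eq_top (G := C) ▸ Subgroup.mem_top _)
      (CommGroup.center_eq_top (G := C) ▸ Subgroup.mem_top _)
    rw [← pow_mul, ← pow_mul, ← pow_add] at hxy
    exact ⟨s * i + t * j, hxy⟩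

/-- `u⁻¹` is itself reached with a drift along `u`, and its quadratic exponent outweighs the linear
drift; so `T` contains a positive power of `u⁻¹`, which cancels the drift of every other element. -/
theorem isPowerFull_of_uniform_drift {u : C} (h : ∀ c, ∃ s : ℕ, ReachesWithDrift T c (u ^ s)) :
    IsPowerFull T := by
  obtain ⟨L, hL, hu⟩ : ∃ L : ℕ, 0 < L ∧ u⁻¹ ^ L ∈ T := by
    obtain ⟨s, q, hq, hs⟩ := h u⁻¹
    obtain ⟨d, hd⟩ : ∃ d, q * (s + 1) = s + 1 + d :=
      Nat.exists_eq_add_of_le (Nat.le_mul_of_pos_left _ hq)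
    refine ⟨(d + 1) * (s + 1), by positivity, ?_⟩
    have hsplit : q * (s + 1) ^ 2 = (d + 1) * (s + 1) + s * (s + 1) := by
      rw [pow_two, ← mul_assoc, hd]
      ring
    have hcancel : u⁻¹ ^ (q * (s + 1) ^ 2) * (u ^ s) ^ (s + 1) = u⁻¹ ^ ((d + 1) * (s + 1)) := by
      rw [hsplit, pow_add, ← pow_mul u, inv_pow u (s * (s + 1)), inv_mul_cancel_right]
    exact hcancel ▸ hs (s + 1)
  intro c
  obtain ⟨s, q, hq, hs⟩ := h c
  refine ⟨q * L ^ 2, by positivity, ?_⟩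
  have hcancel : c ^ (q * L ^ 2) * (u ^ s) ^ L * (u⁻¹ ^ L) ^ s = c ^ (q * L ^ 2) := by
    rw [pow_right_comm u, inv_pow, inv_pow, mul_inv_cancel_right]
  exact hcancel ▸ mul_mem (hs L) (pow_mem hu s)

end ReachesWithDrift

section CentralCommutator

variable {G : Type*} [Group G]

theorem commutatorElement_pow_left_of_mem_center {a b : G} (h : ⁅a, b⁆ ∈ Subgroup.center G)
    (n : ℕ) : ⁅a ^ n, b⁆ = ⁅a, b⁆ ^ n := by
  have hcomm : ∀ x, Commute ⁅a, b⁆ x := fun x ↦ (Subgroup.mem_center_iff.mp h x).symm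
  have hconj : a * (b * a⁻¹ * b⁻¹) = ⁅a, b⁆ := by simp only [commutatorElement_def, mul_assoc]
  have hconj' : b * a⁻¹ * b⁻¹ = a⁻¹ * ⁅a, b⁆ := by rw [← hconj, inv_mul_cancel_left]
  calc ⁅a ^ n, b⁆ = a ^ n * (b * a⁻¹ * b⁻¹) ^ n := by
        rw [conj_pow, inv_pow, commutatorElement_def, mul_assoc, mul_assoc, mul_assoc]
    _ = a ^ n * (a⁻¹ ^ n * ⁅a, b⁆ ^ n) := by rw [hconj', (hcomm a⁻¹).symm.mul_pow]
    _ = ⁅a, b⁆ ^ n := by rw [inv_pow, mul_inv_cancel_left]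

theorem commutatorElement_pow_pow_of_mem_center {a b : G} (h : ⁅a, b⁆ ∈ Subgroup.center G)
    (m n : ℕ) : ⁅a ^ m, b ^ n⁆ = ⁅a, b⁆ ^ (m * n) := by
  have h' : ⁅b, a⁆ ∈ Subgroup.center G := by
    rw [← commutatorElement_inv]; exact inv_mem h
  have hright : ⁅a, b ^ n⁆ = ⁅a, b⁆ ^ n := by
    rw [← commutatorElement_inv, commutatorElement_pow_left_of_mem_center h', ← inv_pow,
      commutatorElement_inv]
  rw [commutatorElement_pow_left_of_mem_center (hright ▸ pow_mem h n), hright, ← pow_mul,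
    mul_comm n m]

theorem commutatorElement_mul_mul_of_mem_center (a b : G) {y z : G}
    (hy : y ∈ Subgroup.center G) (hz : z ∈ Subgroup.center G) : ⁅a * y, b * z⁆ = ⁅a, b⁆ := by
  have hyc : ⁅y, b * z⁆ = 1 := Commute.commutator_eq (Subgroup.mem_center_iff.mp hy _).symm
  have hzc : ⁅a, z⁆ = 1 := Commute.commutator_eq (Subgroup.mem_center_iff.mp hz a)
  rw [commutatorElement_mul_left_eq_conj_mul, hyc, mul_one, mul_inv_cancel, one_mul,
    commutatorElement_mul_right_eq_mul_conj, hzc, mul_one, mul_inv_cancel_right]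

theorem reachesWithDrift_commutatorElement {M : Submonoid G} {a b y z : G}
    (hab : ⁅a, b⁆ ∈ Subgroup.center G) (hy : y ∈ Subgroup.center G) (hz : z ∈ Subgroup.center G)
    (ha : a ∈ M) (hb : b ∈ M) (hay : a⁻¹ * y ∈ M) (hbz : b⁻¹ * z ∈ M) :
    ReachesWithDrift M ⁅a, b⁆ (y * z) := by
  have hyx (x : G) : Commute x y := Subgroup.mem_center_iff.mp hy x
  have hzx (x : G) : Commute x z := Subgroup.mem_center_iff.mp hz x
  refine ⟨1, one_pos, fun n ↦ ?_⟩
  have hword : a ^ n * b ^ n * (a⁻¹ * y) ^ n * (b⁻¹ * z) ^ n =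
      ⁅a, b⁆ ^ (1 * n ^ 2) * (y * z) ^ n := by
    rw [(hyx a⁻¹).mul_pow, (hzx b⁻¹).mul_pow, (hzx y).mul_pow, one_mul, pow_two,
      ← commutatorElement_pow_pow_of_mem_center hab, commutatorElement_def, inv_pow, inv_pow]
    simp only [mul_assoc]
    rw [((hyx (b ^ n)⁻¹).pow_right n).left_comm]
  exact hword ▸
    mul_mem (mul_mem (mul_mem (pow_mem ha n) (pow_mem hb n)) (pow_mem hay n)) (pow_mem hbz n)

end CentralCommutator

section CentralExtension

variable {G : Type*} [Group G] {M : Submonoid G}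

theorem exists_mul_mem_of_mk'_mem_map {Z : Subgroup G} [Z.Normal] {g : G}
    (hg : QuotientGroup.mk' Z g ∈ M.map (QuotientGroup.mk' Z)) : ∃ z ∈ Z, g * z ∈ M := by
  obtain ⟨m, hm, hmg⟩ := hg
  refine ⟨g⁻¹ * m, QuotientGroup.eq.mp hmg.symm, ?_⟩
  rwa [mul_inv_cancel_left]

theorem IsPowerFull.exists_pow_mul_mem {Z : Subgroup G} [Z.Normal]
    (hM : IsPowerFull (M.map (QuotientGroup.mk' Z))) (g : G) :
    ∃ n, 0 < n ∧ ∃ z ∈ Z, g ^ n * z ∈ M := by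
  obtain ⟨n, hn, hg⟩ := hM (QuotientGroup.mk' Z g)
  rw [← map_pow] at hg
  exact ⟨n, hn, exists_mul_mem_of_mk'_mem_map hg⟩

theorem IsPowerFull.exists_inv_mul_mem {Z : Subgroup G} [Z.Normal]
    (hM : IsPowerFull (M.map (QuotientGroup.mk' Z))) {a : G} (ha : a ∈ M) :
    ∃ z ∈ Z, a⁻¹ * z ∈ M := by
  have hinv := hM.inv_mem (Submonoid.mem_map_of_mem (QuotientGroup.mk' Z) ha)
  rw [← map_inv] at hinv
  exact exists_mul_mem_of_mk'_mem_map hinv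

theorem IsPowerFull.exists_drift_of_commutatorElement {Z : Subgroup G} [Z.Normal]
    (hM : IsPowerFull (M.map (QuotientGroup.mk' Z))) (hZ : Z ≤ Subgroup.center G) {g h : G}
    (hgh : ⁅g, h⁆ ∈ Subgroup.center G) : ∃ v ∈ Z, v ∈ M ∧ ReachesWithDrift M ⁅g, h⁆ v := by
  obtain ⟨p, hp, y₀, hy₀, ha⟩ := hM.exists_pow_mul_mem g
  obtain ⟨r, hr, z₀, hz₀, hb⟩ := hM.exists_pow_mul_mem h
  obtain ⟨y, hy, hay⟩ := hM.exists_inv_mul_mem ha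
  obtain ⟨z, hz, hbz⟩ := hM.exists_inv_mul_mem hb
  have hcomm : ⁅g ^ p * y₀, h ^ r * z₀⁆ = ⁅g, h⁆ ^ (p * r) := by
    rw [commutatorElement_mul_mul_of_mem_center _ _ (hZ hy₀) (hZ hz₀),
      commutatorElement_pow_pow_of_mem_center hgh]
  refine ⟨y * z, mul_mem hy hz, ?_, .of_pow (mul_pos hp hr) (hcomm ▸ ?_)⟩
  · simpa only [mul_inv_cancel_left] using mul_mem (mul_mem ha hay) (mul_mem hb hbz)
  · exact reachesWithDrift_commutatorElement (hcomm ▸ pow_mem hgh _) (hZ hy) (hZ hz) ha hb hay hbz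

variable {H K : Subgroup G} [H.Normal] [K.Normal]

theorem IsPowerFull.exists_drift_of_mem_commutator
    (hM : IsPowerFull (M.map (QuotientGroup.mk' ⁅H, K⁆))) (hHK : ⁅H, K⁆ ≤ Subgroup.center G)
    {c : G} (hc : c ∈ ⁅H, K⁆) : ∃ v ∈ ⁅H, K⁆, v ∈ M ∧ ReachesWithDrift M c v := by
  have hgen {g h : G} (hg : g ∈ H) (hh : h ∈ K) : ⁅g, h⁆ ∈ Subgroup.center G :=
    hHK (Subgroup.commutator_mem_commutator hg hh)
  rw [Subgroup.commutator_def] at hc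
  induction hc using Subgroup.closure_induction'' with
  | mem x hx =>
    obtain ⟨g, hg, h, hh, rfl⟩ := hx
    exact hM.exists_drift_of_commutatorElement hHK (hgen hg hh)
  | inv_mem x hx =>
    obtain ⟨g, hg, h, hh, rfl⟩ := hx
    have hinv : ⁅h, g⁆ ∈ Subgroup.center G := commutatorElement_inv g h ▸ inv_mem (hgen hg hh)
    rw [commutatorElement_inv]
    exact hM.exists_drift_of_commutatorElement hHK hinv
  | one => exact ⟨1, one_mem _, one_mem _, .one M⟩
  | mul x y hx _ ihx ihy =>
    obtain ⟨v, hv, hvM, hxv⟩ := ihx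
    obtain ⟨w, hw, hwM, hyw⟩ := ihy
    have hxy : Commute x y := (Subgroup.mem_center_iff.mp (hHK hx) y).symm
    obtain ⟨i, j, hdrift⟩ := hxv.mul hyw hxy (hHK hv) (hHK hw)
    exact ⟨v ^ i * w ^ j, mul_mem (pow_mem hv i) (pow_mem hw j),
      mul_mem (pow_mem hvM i) (pow_mem hwM j), hdrift⟩

theorem IsPowerFull.comap_commutator [Group.FG ↥⁅H, K⁆]
    (hM : IsPowerFull (M.map (QuotientGroup.mk' ⁅H, K⁆))) (hHK : ⁅H, K⁆ ≤ Subgroup.center G) :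
    IsPowerFull (M.comap (Subgroup.subtype ⁅H, K⁆)) := by
  let : CommGroup ↥⁅H, K⁆ :=
    { mul_comm := fun x y ↦ Subtype.ext (Subgroup.mem_center_iff.mp (hHK y.2) x) }
  obtain ⟨u, hu⟩ := exists_uniform_drift (T := M.comap (Subgroup.subtype ⁅H, K⁆)) fun c ↦ by
    obtain ⟨v, hv, hvM, q, hq, h⟩ := hM.exists_drift_of_mem_commutator hHK c.2
    exact ⟨⟨v, hv⟩, hvM, q, hq, h⟩
  exact isPowerFull_of_uniform_drift hu

theorem IsPowerFull.of_map_mk'_commutator [Group.FG ↥⁅H, K⁆]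
    (hM : IsPowerFull (M.map (QuotientGroup.mk' ⁅H, K⁆))) (hHK : ⁅H, K⁆ ≤ Subgroup.center G) :
    IsPowerFull M := by
  intro g
  obtain ⟨n, hn, z, hz, hgz⟩ := hM.exists_pow_mul_mem g
  obtain ⟨m, hm, hzm⟩ := hM.comap_commutator hHK ⟨z, hz⟩⁻¹
  refine ⟨n * m, mul_pos hn hm, ?_⟩
  have hcomm : Commute (g ^ n) z := Subgroup.mem_center_iff.mp (hHK hz) (g ^ n)
  have hcancel : (g ^ n * z) ^ m * z⁻¹ ^ m = g ^ (n * m) := by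
    rw [hcomm.mul_pow, pow_mul, inv_pow, mul_inv_cancel_right]
  exact hcancel ▸ mul_mem (pow_mem hgz m) hzm

end CentralExtension

section LowerCentralSeries

variable {G : Type*} [Group G]

theorem commutator_closure_closure_le {X Y : Set G} {H : Subgroup G} [H.Normal]
    (h : ∀ x ∈ X, ∀ y ∈ Y, ⁅x, y⁆ ∈ H) : ⁅Subgroup.closure X, Subgroup.closure Y⁆ ≤ H := by
  rw [← QuotientGroup.ker_mk' H, ← Subgroup.map_eq_bot_iff, Subgroup.map_commutator,
    MonoidHom.map_closure, MonoidHom.map_closure, Subgroup.commutator_eq_bot_iff_le_centralizer,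
    Subgroup.centralizer_closure, Subgroup.closure_le]
  rintro _ ⟨x, hx, rfl⟩ _ ⟨y, hy, rfl⟩
  have hxy : ⁅(x : G ⧸ H), (y : G ⧸ H)⁆ = 1 := (QuotientGroup.eq_one_iff ⁅x, y⁆).mpr (h x hx y hy)
  exact (commutatorElement_eq_one_iff_mul_comm.mp hxy).symm

theorem fg_commutator_top [Group.FG G] {K : Subgroup G} [K.Normal]
    (hK : ⁅K, ⊤⁆ ≤ Subgroup.center G) (hfg : (K.map (QuotientGroup.mk' ⁅K, ⊤⁆)).FG) :
    ⁅K, (⊤ : Subgroup G)⁆.FG := by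
  classical
  obtain ⟨Y, hY⟩ := Group.fg_def.mp (inferInstance : Group.FG G)
  obtain ⟨S, hS⟩ := hfg
  obtain ⟨X, hXK, rfl⟩ :
      ∃ X : Finset G, (X : Set G) ⊆ K ∧ X.image (QuotientGroup.mk' ⁅K, ⊤⁆) = S := by
    rw [← Finset.subset_set_image_iff, ← Subgroup.coe_map, ← hS]
    exact Subgroup.subset_closure
  have hKX : K ≤ Subgroup.closure (X ∪ (⁅K, ⊤⁆ : Subgroup G)) := by
    rw [Finset.coe_image, ← MonoidHom.map_closure, Subgroup.map_eq_map_iff,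
      QuotientGroup.ker_mk'] at hS
    rw [Subgroup.closure_union, Subgroup.closure_eq, hS]
    exact le_sup_left
  let H := Subgroup.closure (Finset.image₂ (⁅·, ·⁆) X Y : Set G)
  have hH : H ≤ ⁅K, ⊤⁆ := by
    rw [Subgroup.closure_le, Finset.coe_image₂, Set.image2_subset_iff]
    exact fun x hx y _ ↦ Subgroup.commutator_mem_commutator (hXK hx) (Subgroup.mem_top y)
  have : H.Normal := Subgroup.commutator_top_right_le_iff.mp <|
    (Subgroup.commutator_top_right_eq_bot_iff_le_center.mpr (hH.trans hK)).trans_le bot_le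
  refine ⟨Finset.image₂ (⁅·, ·⁆) X Y, hH.antisymm ?_⟩
  refine (Subgroup.commutator_mono hKX hY.ge).trans (commutator_closure_closure_le ?_)
  rintro x (hx | hx) y hy
  · exact Subgroup.subset_closure (Finset.mem_coe.mpr (Finset.mem_image₂_of_mem hx hy))
  · rw [Commute.commutator_eq (Subgroup.mem_center_iff.mp (hK hx) y).symm]
    exact one_mem H

theorem lowerCentralSeries_quotient_lowerCentralSeries {n : ℕ} :
    (⊤ : Subgroup (G ⧸ (⊤ : Subgroup G).lowerCentralSeries n)).lowerCentralSeries n = ⊥ := by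
  rw [← Subgroup.map_top_of_surjective _
    (QuotientGroup.mk'_surjective ((⊤ : Subgroup G).lowerCentralSeries n)),
    ← Subgroup.map_lowerCentralSeries, QuotientGroup.map_mk'_self]

theorem lowerCentralSeries_le_center {n : ℕ}
    (hn : (⊤ : Subgroup G).lowerCentralSeries (n + 1) = ⊥) :
    (⊤ : Subgroup G).lowerCentralSeries n ≤ Subgroup.center G :=
  Subgroup.commutator_top_right_eq_bot_iff_le_center.mp hn

theorem fg_lowerCentralSeries [Group.FG G] {n : ℕ}
    (hn : (⊤ : Subgroup G).lowerCentralSeries (n + 1) = ⊥) :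
    ((⊤ : Subgroup G).lowerCentralSeries n).FG := by
  induction n generalizing G with
  | zero => exact Group.fg_def.mp inferInstance
  | succ n ih =>
    refine fg_commutator_top (lowerCentralSeries_le_center hn) ?_
    have hquot := ih (G := G ⧸ (⊤ : Subgroup G).lowerCentralSeries (n + 1))
      lowerCentralSeries_quotient_lowerCentralSeries
    rwa [← Subgroup.map_top_of_surjective _ (QuotientGroup.mk'_surjective _),
      ← Subgroup.map_lowerCentralSeries] at hquot

theorem IsPowerFull.of_map_abelianization_of_lowerCentralSeries_eq_bot [Group.FG G]
    {M : Submonoid G} {n : ℕ} (hn : (⊤ : Subgroup G).lowerCentralSeries (n + 1) = ⊥)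
    (hM : IsPowerFull (M.map Abelianization.of)) : IsPowerFull M := by
  induction n generalizing G with
  | zero =>
    intro g
    obtain ⟨n, hn0, m, hm, hmg⟩ := hM (Abelianization.of g)
    have hinj : Function.Injective (Abelianization.of (G := G)) := by
      rw [← MonoidHom.ker_eq_bot_iff, Abelianization.ker_of]
      exact hn
    rw [← map_pow] at hmg
    exact ⟨n, hn0, hinj hmg ▸ hm⟩
  | succ n ih =>
    let π := QuotientGroup.mk' ((⊤ : Subgroup G).lowerCentralSeries (n + 1))
    have hπ : Function.Surjective (Abelianization.map π) := by
      refine Function.Surjective.of_comp (g := Abelianization.of) ?_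
      exact QuotientGroup.mk_surjective.comp (QuotientGroup.mk'_surjective _)
    have : Group.FG ↥(⁅(⊤ : Subgroup G).lowerCentralSeries n, ⊤⁆ : Subgroup G) :=
      (Group.fg_iff_subgroup_fg _).mpr (fg_lowerCentralSeries hn)
    refine IsPowerFull.of_map_mk'_commutator ?_ (lowerCentralSeries_le_center hn)
    refine ih (M := M.map π) lowerCentralSeries_quotient_lowerCentralSeries ?_
    have hMπ := hM.map hπ
    rwa [Submonoid.map_map] at hMπ ⊢

theorem IsPowerFull.of_map_abelianization [Group.FG G] [Group.IsNilpotent G] {M : Submonoid G}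
    (hM : IsPowerFull (M.map Abelianization.of)) : IsPowerFull M := by
  obtain ⟨n, hn⟩ :=
    Subgroup.nilpotent_iff_lowerCentralSeries.mp (inferInstance : Group.IsNilpotent G)
  exact hM.of_map_abelianization_of_lowerCentralSeries_eq_bot
    (le_bot_iff.mp (hn ▸ Subgroup.lowerCentralSeries_antitone ⊤ n.le_succ))

end LowerCentralSeries

section IntegerCone

theorem exists_addMonoidHom_real_rat_pos {ι : Type*} [Finite ι] {x : ι → ℝ} (hx : ∀ i, 0 < x i) :
    ∃ f : ℝ →+ ℚ, ∀ i, 0 < f (x i) := by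
  let b := Module.Basis.ofVectorSpace ℚ ℝ
  let F (w : Module.Basis.ofVectorSpaceIndex ℚ ℝ → ℝ) (y : ℝ) : ℝ :=
    (b.repr y).sum fun j q ↦ q * w j
  have hFb (y : ℝ) : F b y = y := by
    simpa [F, Finsupp.linearCombination_apply, Rat.smul_def] using b.linearCombination_repr y
  have hopen : IsOpen {w | ∀ i, 0 < F w (x i)} := by
    rw [Set.ofPred_forall]
    refine isOpen_iInter_of_finite fun i ↦ isOpen_lt continuous_const ?_
    exact continuous_finsetSum _ fun j _ ↦ continuous_const.mul (continuous_apply j)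
  obtain ⟨w, hw⟩ := (DenseRange.piMap fun _ ↦ Rat.denseRange_cast (𝕜 := ℝ)).exists_mem_open hopen
    ⟨b, fun i ↦ (hFb (x i)).symm ▸ hx i⟩
  refine ⟨(b.constr ℚ w).toAddMonoidHom, fun i ↦ ?_⟩
  have hcast : ((b.constr ℚ w (x i) : ℚ) : ℝ) = F (Pi.map (fun _ ↦ Rat.cast) w) (x i) := by
    simp [F, Module.Basis.constr_apply, Finsupp.sum]
  exact_mod_cast hcast ▸ hw i

theorem exists_mul_eq_natCast {ι : Type*} [Finite ι] {x : ι → ℚ} (hx : ∀ i, 0 < x i) :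
    ∃ D : ℕ, ∀ i, ∃ m : ℕ, 0 < m ∧ D * x i = m := by
  have := Fintype.ofFinite ι
  refine ⟨∏ i, (x i).den, fun i ↦ ?_⟩
  obtain ⟨c, hc⟩ := Finset.dvd_prod_of_mem (fun i ↦ (x i).den) (Finset.mem_univ i)
  have hprod : ∏ i, (x i).den ≠ 0 := Finset.prod_ne_zero_iff.mpr fun i _ ↦ (x i).den_nz
  have hc0 : 0 < c := Nat.pos_of_ne_zero (right_ne_zero_of_mul (hc ▸ hprod))
  have hnum : (((x i).num.toNat : ℤ) : ℚ) = (x i).num := by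
    rw [Int.toNat_of_nonneg (Rat.num_nonneg.mpr (hx i).le)]
  refine ⟨c * (x i).num.toNat, Nat.mul_pos hc0 (by simpa using hx i), ?_⟩
  rw [hc, Nat.cast_mul, Nat.cast_mul, ← Int.cast_natCast (x i).num.toNat, hnum, mul_comm (_ : ℚ) c,
    mul_assoc, mul_comm (_ : ℚ) (x i), Rat.mul_den_eq_num]

theorem exists_nsmul_eq_sum_of_coneFin_eq_univ {k n : ℕ} {V : Fin k → Fin n → ℤ}
    (hV : coneFin (fun i j ↦ (V i j : ℝ)) = Set.univ) (t : Fin n → ℤ) :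
    ∃ m, 0 < m ∧ ∃ c : Fin k → ℕ, m • t = ∑ i, c i • V i := by
  obtain ⟨r, hr, hrt⟩ : (fun j ↦ ((t - ∑ i, V i) j : ℝ)) ∈ coneFin fun i j ↦ (V i j : ℝ) :=
    hV ▸ Set.mem_univ _
  let x (o : Option (Fin k)) : ℝ := o.elim 1 fun i ↦ r i + 1
  have hx : ∀ o, 0 < x o := by
    rintro (_ | i)
    · exact one_pos
    · exact add_pos_of_nonneg_of_pos (hr i) one_pos
  have hsum (j : Fin n) : t j • x none = ∑ i, V i j • x (some i) := by
    have hj : (t j : ℝ) - ∑ i, (V i j : ℝ) = ∑ i, r i * V i j := by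
      simpa [Finset.sum_apply] using congrFun hrt j
    simp only [x, Option.elim, zsmul_eq_mul, mul_add, mul_one, Finset.sum_add_distrib]
    simp only [mul_comm _ (r _), ← hj, sub_add_cancel]
  obtain ⟨f, hf⟩ := exists_addMonoidHom_real_rat_pos hx
  obtain ⟨D, hD⟩ := exists_mul_eq_natCast hf
  choose m hm hmD using hD
  refine ⟨m none, hm none, fun i ↦ m (some i), ?_⟩
  ext j
  have hfj : t j • f (x none) = ∑ i, V i j • f (x (some i)) := by
    simpa only [map_zsmul, map_sum] using congrArg f (hsum j)
  have hDj : (t j : ℚ) * m none = ∑ i, (V i j : ℚ) * m (some i) := by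
    simpa only [Finset.mul_sum, zsmul_eq_mul, mul_left_comm (D : ℚ), hmD]
      using congrArg ((D : ℚ) * ·) hfj
  simp only [Finset.sum_apply, Pi.smul_apply]
  simp only [nsmul_eq_mul, mul_comm (m _ : ℤ)]
  exact_mod_cast hDj

end IntegerCone

theorem isPowerFull_closure_range_of_coneFin_eq_univ {B : Type*} [CommGroup B] {k n : ℕ}
    {φ : B →* Multiplicative (Fin n → ℤ)} (hφ : ∀ b, φ b = 1 → IsOfFinOrder b) {a : Fin k → B}
    (ha : coneFin (fun i j ↦ ((φ (a i)).toAdd j : ℝ)) = Set.univ) :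
    IsPowerFull (Submonoid.closure (Set.range a)) := by
  intro b
  obtain ⟨m, hm, c, hc⟩ := exists_nsmul_eq_sum_of_coneFin_eq_univ ha (φ b).toAdd
  have hφb : φ (b ^ m) = φ (∏ i, a i ^ c i) := by
    apply Multiplicative.toAdd.injective
    simpa [map_prod] using hc
  have htorsion : IsOfFinOrder (b ^ m / ∏ i, a i ^ c i) :=
    hφ _ (by rw [map_div, hφb, div_self'])
  obtain ⟨N, hN, hbN⟩ := htorsion.exists_pow_eq_one
  rw [div_pow, div_eq_one, ← pow_mul] at hbN
  refine ⟨m * N, mul_pos hm hN, hbN ▸ pow_mem (prod_mem fun i _ ↦ pow_mem ?_ _) N⟩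
  exact Submonoid.subset_closure (Set.mem_range_self i)

theorem nonempty_of_coneFin_eq_univ {k n : ℕ} [NeZero n] {v : Fin k → Fin n → ℝ}
    (h : coneFin v = Set.univ) : Nonempty (Fin k) := by
  by_contra hk
  rw [not_nonempty_iff] at hk
  obtain ⟨r, -, hr⟩ : 1 ∈ coneFin v := h ▸ Set.mem_univ _
  simpa using congrFun hr 0

theorem stmt9_general {G : Type*} [Group G] [Group.FG G] [Group.IsNilpotent G] {k n : ℕ} [NeZero n]
    {φ : G →* Multiplicative (Fin n → ℤ)}
    (hφ : ∀ g, φ g = 1 → IsOfFinOrder (Abelianization.of g)) {A : Fin k → G}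
    (hcone : coneFin (fun i j ↦ ((φ (A i)).toAdd j : ℝ)) = Set.univ) :
    1 ∈ Subsemigroup.closure (Set.range A) := by
  have hA : (Set.range A).Nonempty :=
    Set.range_nonempty_iff_nonempty.mpr (nonempty_of_coneFin_eq_univ hcone)
  refine one_mem_subsemigroup_closure_of_isPowerFull hA (IsPowerFull.of_map_abelianization ?_)
  rw [MonoidHom.map_mclosure, ← Set.range_comp]
  have hlift (b : Abelianization G) (hb : Abelianization.lift φ b = 1) : IsOfFinOrder b := by
    obtain ⟨g, rfl⟩ := QuotientGroup.mk_surjective b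
    exact hφ g hb
  exact isPowerFull_closure_range_of_coneFin_eq_univ hlift hcone

/-- The group `UT(4,ℤ)` in the coordinates of `UT`, so that its group laws are polynomial identities
in six integers. -/
@[ext]
structure Unitriangular where
  (a b c d e f : ℤ)

namespace Unitriangular

instance : Mul Unitriangular where
  mul x y := ⟨x.a + y.a, x.b + y.b, x.c + y.c, x.d + y.d + x.a * y.b, x.e + y.e + x.b * y.c,
    x.f + y.f + x.a * y.e + x.d * y.c⟩

instance : One Unitriangular where
  one := ⟨0, 0, 0, 0, 0, 0⟩

instance : Inv Unitriangular where
  inv x := ⟨-x.a, -x.b, -x.c, x.a * x.b - x.d, x.b * x.c - x.e,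
    x.a * x.e + x.d * x.c - x.a * x.b * x.c - x.f⟩

theorem mul_def (x y : Unitriangular) :
    x * y = ⟨x.a + y.a, x.b + y.b, x.c + y.c, x.d + y.d + x.a * y.b, x.e + y.e + x.b * y.c,
      x.f + y.f + x.a * y.e + x.d * y.c⟩ :=
  rfl

theorem one_def : (1 : Unitriangular) = ⟨0, 0, 0, 0, 0, 0⟩ :=
  rfl

theorem inv_def (x : Unitriangular) :
    x⁻¹ = ⟨-x.a, -x.b, -x.c, x.a * x.b - x.d, x.b * x.c - x.e,
      x.a * x.e + x.d * x.c - x.a * x.b * x.c - x.f⟩ :=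
  rfl

instance : Group Unitriangular :=
  Group.ofLeftAxioms
    (fun x y z ↦ by ext <;> simp only [mul_def] <;> ring)
    (fun x ↦ by ext <;> simp [mul_def, one_def])
    (fun x ↦ by ext <;> simp only [mul_def, one_def, inv_def] <;> ring)

/-- The inclusion of `UT(4,ℤ)` into the multiplicative monoid of integer matrices. -/
def toMatrix : Unitriangular →* Matrix (Fin 4) (Fin 4) ℤ where
  toFun x := UT x.a x.b x.c x.d x.e x.f
  map_one' := by decide
  map_mul' x y := by
    ext i j
    fin_cases i <;> fin_cases j <;> simp [UT, mul_def, Matrix.mul_apply, Fin.sum_univ_four] <;> ring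

/-- The homomorphism `φ0 : UT(4,ℤ) → ℤ³`. -/
def phi0 : Unitriangular →* Multiplicative (Fin 3 → ℤ) where
  toFun x := Multiplicative.ofAdd ![x.a, x.b, x.c]
  map_one' := by simp [one_def]
  map_mul' x y := by rw [← ofAdd_add]; simp [mul_def]

theorem mem_upperCentralSeries_one {x : Unitriangular} (ha : x.a = 0) (hb : x.b = 0)
    (hc : x.c = 0) (hd : x.d = 0) (he : x.e = 0) :
    x ∈ Subgroup.upperCentralSeries Unitriangular 1 := by
  rw [Subgroup.upperCentralSeries_one, Subgroup.mem_center_iff]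
  intro y
  ext <;> simp [mul_def, ha, hb, hc, hd, he, add_comm]

theorem mem_upperCentralSeries_two {x : Unitriangular} (ha : x.a = 0) (hb : x.b = 0)
    (hc : x.c = 0) : x ∈ Subgroup.upperCentralSeries Unitriangular 2 := by
  rw [Subgroup.mem_upperCentralSeries_succ_iff]
  intro y
  apply mem_upperCentralSeries_one <;>
    simp only [commutatorElement_def, mul_def, inv_def, ha, hb, hc] <;> ring

instance : Group.IsNilpotent Unitriangular where
  nilpotent' := by
    refine ⟨3, (Subgroup.eq_top_iff' _).mpr fun x ↦ ?_⟩
    rw [Subgroup.mem_upperCentralSeries_succ_iff]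
    intro y
    apply mem_upperCentralSeries_two <;>
      simp only [commutatorElement_def, mul_def, inv_def] <;> ring

theorem zpow_eq_of_mul_eq_zero {x : Unitriangular} (hab : x.a * x.b = 0) (hbc : x.b * x.c = 0)
    (hae : x.a * x.e = 0) (hdc : x.d * x.c = 0) (t : ℤ) :
    x ^ t = ⟨t * x.a, t * x.b, t * x.c, t * x.d, t * x.e, t * x.f⟩ := by
  let F : Multiplicative ℤ →* Unitriangular := MonoidHom.mk'
    (fun t ↦ ⟨t.toAdd * x.a, t.toAdd * x.b, t.toAdd * x.c, t.toAdd * x.d, t.toAdd * x.e,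
      t.toAdd * x.f⟩)
    fun s t ↦ by
      simp [mul_def, add_mul, mul_mul_mul_comm _ x.a, mul_mul_mul_comm _ x.b,
        mul_mul_mul_comm _ x.d, hab, hbc, hae, hdc]
  have hF := map_zpow F (Multiplicative.ofAdd 1) t
  simpa [F, ← ofAdd_zsmul] using hF.symm

instance : Group.FG Unitriangular := by
  let S : Set Unitriangular :=
    {⟨1, 0, 0, 0, 0, 0⟩, ⟨0, 1, 0, 0, 0, 0⟩, ⟨0, 0, 1, 0, 0, 0⟩, ⟨0, 0, 0, 1, 0, 0⟩,
      ⟨0, 0, 0, 0, 1, 0⟩, ⟨0, 0, 0, 0, 0, 1⟩}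
  refine Group.fg_iff.mpr ⟨S, (Subgroup.eq_top_iff' _).mpr fun x ↦ ?_, Set.toFinite S⟩
  have hx : x = ⟨0, 0, 0, 0, 0, 1⟩ ^ x.f * ⟨0, 0, 0, 0, 1, 0⟩ ^ x.e * ⟨0, 0, 1, 0, 0, 0⟩ ^ x.c *
      ⟨0, 1, 0, 0, 0, 0⟩ ^ x.b * ⟨1, 0, 0, 0, 0, 0⟩ ^ x.a * ⟨0, 0, 0, 1, 0, 0⟩ ^ x.d := by
    simp [zpow_eq_of_mul_eq_zero, mul_def]
  rw [hx]
  refine mul_mem (mul_mem (mul_mem (mul_mem (mul_mem ?_ ?_) ?_) ?_) ?_) ?_ <;>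
    exact zpow_mem (Subgroup.subset_closure (by simp [S])) _

theorem ker_phi0_le_commutator : phi0.ker ≤ commutator Unitriangular := by
  intro x hx
  obtain ⟨ha, hb, hc⟩ : x.a = 0 ∧ x.b = 0 ∧ x.c = 0 := by
    simpa [phi0, MonoidHom.mem_ker] using hx
  have hxcomm : x = ⁅(⟨x.d, 0, 0, 0, 0, 0⟩ : Unitriangular), ⟨0, 1, 0, 0, 0, 0⟩⁆ *
      ⁅(⟨0, 1, 0, 0, 0, 0⟩ : Unitriangular), ⟨0, 0, x.e, 0, 0, 0⟩⁆ *
      ⁅(⟨x.f, 0, 0, 0, 0, 0⟩ : Unitriangular), ⟨0, 0, 0, 0, 1, 0⟩⁆ := by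
    ext <;> simp [commutatorElement_def, mul_def, inv_def, ha, hb, hc]
  have hmem (y z : Unitriangular) : ⁅y, z⁆ ∈ commutator Unitriangular :=
    Subgroup.commutator_mem_commutator (Subgroup.mem_top y) (Subgroup.mem_top z)
  exact hxcomm ▸ mul_mem (mul_mem (hmem _ _) (hmem _ _)) (hmem _ _)

theorem isOfFinOrder_of_phi0_eq_one {x : Unitriangular} (hx : phi0 x = 1) :
    IsOfFinOrder (Abelianization.of x) := by
  have hx' : x ∈ Abelianization.of.ker := (Abelianization.ker_of _).ge (ker_phi0_le_commutator hx)
  exact (MonoidHom.mem_ker.mp hx') ▸ IsOfFinOrder.one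

theorem exists_toMatrix_eq {ι : Type*} {A : ι → Matrix (Fin 4) (Fin 4) ℤ} (hA : ∀ i, A i ∈ UT4) :
    ∃ x : ι → Unitriangular, A = toMatrix ∘ x := by
  choose a b c d e f h using hA
  exact ⟨fun i ↦ ⟨a i, b i, c i, d i, e i, f i⟩, funext h⟩

theorem phi0R_toMatrix (x : Unitriangular) :
    phi0R (toMatrix x) = fun j ↦ ((phi0 x).toAdd j : ℝ) := by
  ext j
  fin_cases j <;> rfl

theorem one_mem_closure_range_toMatrix_comp {ι : Type*} {x : ι → Unitriangular}
    (hx : 1 ∈ Subsemigroup.closure (Set.range x)) :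
    1 ∈ Subsemigroup.closure (Set.range (toMatrix ∘ x)) := by
  have hmap := Subsemigroup.mem_map_of_mem toMatrix.toMulHom hx
  rw [MulHom.map_mclosure, ← Set.range_comp] at hmap
  exact map_one toMatrix ▸ hmap

end Unitriangular

theorem stmt9 (k : ℕ) (A : Fin k → Matrix (Fin 4) (Fin 4) ℤ)
    (hA : ∀ i, A i ∈ UT4)
    (hcone : coneFin (fun i => phi0R (A i)) = Set.univ) :
    (1 : Matrix (Fin 4) (Fin 4) ℤ) ∈ Subsemigroup.closure (Set.range A) := by
  obtain ⟨x, rfl⟩ := Unitriangular.exists_toMatrix_eq hA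
  simp only [Function.comp_apply, Unitriangular.phi0R_toMatrix] at hcone
  exact Unitriangular.one_mem_closure_range_toMatrix_comp
    (stmt9_general (fun _ ↦ Unitriangular.isOfFinOrder_of_phi0_eq_one) hcone)
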